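/- Let A ∈ ℝ^{m×n} and B ∈ ℝ^{l×n} with B injective, and let 1 < q ≤ 2 ≤ p < ∞. Then ‖A‖_{p↦q;B} ≤ (1/2)·min over (v,w) ∈ K of ( ‖v‖_{q/(2−q)} + ‖w‖_{p/(p−2)} ) ≤ γ_p·γ_{q*}·‖A‖_{p↦q;B}, where the exponents q/(2−q) and p/(p−2) are interpreted as ∞ when q = 2 or p = 2, respectively. -/

import Mathlib

open Matrix
open scoped ENNReal

/-- The vector `p`-norm on `ℝ^k`, for `p ∈ [1,∞]` (given as an element of `ℝ≥0∞`). -/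
noncomputable def pNorm {k : ℕ} (p : ℝ≥0∞) (x : Fin k → ℝ) : ℝ :=
  if p = ∞ then ⨆ i, |x i| else (∑ i, |x i| ^ p.toReal) ^ (1 / p.toReal)

/-- The generalized matrix `p ↦ q ; B`-norm: `‖A‖_{p↦q;B} = sup { ‖A v‖_q : ‖B v‖_p ≤ 1 }`. -/
noncomputable def gnorm {m n l : ℕ} (A : Matrix (Fin m) (Fin n) ℝ)
    (B : Matrix (Fin l) (Fin n) ℝ) (p q : ℝ≥0∞) : ℝ :=
  sSup {r : ℝ | ∃ v : Fin n → ℝ, pNorm p (B.mulVec v) ≤ 1 ∧ r = pNorm q (A.mulVec v)}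

/-- `γ_s`, the `s`-th root of the `s`-th absolute moment of a standard Gaussian random
variable: `γ_s = (2^{s/2} Γ((s+1)/2) / √π)^{1/s}`. -/
noncomputable def gam (s : ℝ) : ℝ :=
  ((2 : ℝ) ^ (s / 2) * Real.Gamma ((s + 1) / 2) / Real.sqrt Real.pi) ^ (1 / s)

/-- The feasible set `K`: pairs `(v, w)` such that the block matrix
`[[Diag v, −A], [−Aᵀ, Bᵀ Diag w B]]` is positive semidefinite. -/
def Kset {m n l : ℕ} (A : Matrix (Fin m) (Fin n) ℝ) (B : Matrix (Fin l) (Fin n) ℝ) :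
    Set ((Fin m → ℝ) × (Fin l → ℝ)) :=
  {vw | (fromBlocks (diagonal vw.1) (-A) (-Aᵀ) (Bᵀ * diagonal vw.2 * B)).PosSemidef}

/-!
Write `s = q* = q / (q - 1)`, so that `s, p ≥ 2`. The exponent `q / (2 - q)` equals
`s / (s - 2)`, and `t / (t - 2)` is the Hölder conjugate of `t / 2`; this exponent is called
`ex t`.

**Lower bound.** Evaluating the quadratic form of the block matrix shows that `(v, w) ∈ K` if
and only if `2 yᵀAx ≤ ∑ vᵢ yᵢ² + ∑ wⱼ (Bx)ⱼ²` for all `y, x` (`mem_Kset_iff`). If `‖Bx‖_p ≤ 1`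
and `y` is the Hölder dual of `Ax`, so that `‖y‖_s ≤ 1` and `yᵀAx = ‖Ax‖_q`, then Hölder's
inequality with exponents `t / 2` and `ex t` (`holder_ex`) bounds the right-hand side by
`‖v‖ + ‖w‖` (`pNorm_mulVec_le`). The set `K` is nonempty because `A = D B` for some `D`
(`Kset_nonempty`), so the supremum defining the norm of `A` is over a bounded set.

**Upper bound.** Let `c = γ_p γ_s ‖A‖`. It suffices that the compact convex set
`S = {‖v‖ ≤ c} × {‖w‖ ≤ c}` meets `K`. Otherwise the block matrices indexed by `S` can be
strictly separated from the closed convex cone of positive semidefinite matrices, and the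
separating functional is represented by a positive semidefinite matrix `P` for which
`∑ vᵢ Pᵢᵢ + ∑ wⱼ bⱼᵀPbⱼ < 2 ∑ Aᵢⱼ Pᵢⱼ` on all of `S`, where `bⱼ` is the `j`-th row of `B`
(`sdp_duality`). A Gaussian vector `(y, x)` with covariance `P` contradicts this
(`gaussian_rounding`): one has `yᵀAx ≤ ‖A‖ ‖y‖_s ‖Bx‖_p` pointwise, and taking expectations,
with AM-GM weighted by `γ_p / γ_s` and Jensen's inequality `E ‖y‖_s² ≤ (E ‖y‖_s^s)^(2/s)`
(`mg_jensen`), gives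
`2 ∑ Aᵢⱼ Pᵢⱼ ≤ c (‖(Pᵢᵢ)ᵢ‖_{s/2} + ‖(bⱼᵀPbⱼ)ⱼ‖_{p/2})`. By duality of Hölder norms
(`exists_dual_ex`) some `(v, w) ∈ S` attains the right-hand side.
-/

/-! ### Absolute moments of Gaussian vectors -/

open MeasureTheory ProbabilityTheory

lemma gam_pos (s : ℝ) (hs : 0 < s) : 0 < gam s := by
  unfold gam
  have := Real.Gamma_pos_of_pos (show 0 < (s + 1) / 2 by linarith)
  have := Real.pi_pos
  positivity

lemma gam_rpow (s : ℝ) (hs : 0 < s) :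
    gam s ^ s = (2 : ℝ) ^ (s / 2) * Real.Gamma ((s + 1) / 2) / Real.sqrt Real.pi := by
  unfold gam
  have := Real.Gamma_pos_of_pos (show 0 < (s + 1) / 2 by linarith)
  rw [← Real.rpow_mul (by positivity), one_div_mul_cancel hs.ne', Real.rpow_one]

/-- `γ_s ^ s` is the `s`-th absolute moment of the standard Gaussian. -/
lemma integral_std (s : ℝ) (hs : 0 < s) :
    ∫ x, |x| ^ s ∂(gaussianReal 0 1) = gam s ^ s := by
  rw [gam_rpow s hs, integral_gaussianReal_eq_integral_smul one_ne_zero]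
  have h1 : ∀ x : ℝ, gaussianPDFReal 0 1 x • |x| ^ s
      = (fun y : ℝ => (Real.sqrt (2 * Real.pi))⁻¹ * (y ^ s * Real.exp (-(1 / 2) * y ^ (2 : ℝ)))) |x| := by
    intro x
    simp only [gaussianPDFReal, smul_eq_mul, Real.rpow_two, sq_abs]
    simp
    ring_nf
  simp_rw [h1]
  rw [integral_comp_abs (f := fun y : ℝ => (Real.sqrt (2 * Real.pi))⁻¹ * (y ^ s * Real.exp (-(1 / 2) * y ^ (2 : ℝ)))),
    integral_const_mul,
    integral_rpow_mul_exp_neg_mul_rpow (by norm_num) (by linarith) (by norm_num)]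
  have h2 : (1 / 2 : ℝ) ^ (-(s + 1) / 2) = 2 ^ (s / 2) * Real.sqrt 2 := by
    rw [one_div, Real.inv_rpow (by norm_num), ← Real.rpow_neg (by norm_num), Real.sqrt_eq_rpow,
      ← Real.rpow_add (by norm_num)]
    congr 1; ring
  rw [h2, Real.sqrt_mul (by norm_num)]
  have := Real.pi_pos
  field_simp

lemma integral_gauss (s : ℝ) (hs : 0 < s) (v : NNReal) :
    ∫ x, |x| ^ s ∂(gaussianReal 0 v) = gam s ^ s * (v : ℝ) ^ (s / 2) := by
  have h : gaussianReal 0 v = (gaussianReal 0 1).map (fun x => Real.sqrt v * x) := by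
    rw [gaussianReal_map_const_mul]
    congr 1
    · simp
    · ext; simp
  rw [h, integral_map (by fun_prop) (by
    apply Measurable.aestronglyMeasurable; fun_prop)]
  have : ∀ x : ℝ, |Real.sqrt v * x| ^ s = (v : ℝ) ^ (s / 2) * |x| ^ s := by
    intro x
    have hv : (0 : ℝ) ≤ v := v.2
    rw [abs_mul, Real.mul_rpow (abs_nonneg _) (abs_nonneg _), abs_of_nonneg (Real.sqrt_nonneg _),
      Real.sqrt_eq_rpow, ← Real.rpow_mul hv]
    congr 2; ring
  simp_rw [this]
  rw [integral_const_mul, integral_std s hs, mul_comm]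

section
variable {ι : Type*} [Fintype ι] [DecidableEq ι]

/-- The linear functional `z ↦ ∑ i, c i * z i` on Euclidean space. -/
noncomputable def dualL (c : ι → ℝ) : StrongDual ℝ (EuclideanSpace ℝ ι) :=
  innerSL ℝ (WithLp.toLp 2 c)

omit [DecidableEq ι] in
lemma dualL_apply (c : ι → ℝ) (z : EuclideanSpace ℝ ι) : dualL c z = c ⬝ᵥ z.ofLp := by
  simp [dualL, PiLp.inner_apply, dotProduct, mul_comm]

lemma mg_map {P : Matrix ι ι ℝ} (hP : P.PosSemidef) (c : ι → ℝ) :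
    (multivariateGaussian 0 P).map (dualL c) = gaussianReal 0 (c ⬝ᵥ P *ᵥ c).toNNReal := by
  rw [IsGaussian.map_eq_gaussianReal, ContinuousLinearMap.integral_comp_id_comm]
  · have : Var[dualL c; multivariateGaussian 0 P] = c ⬝ᵥ P *ᵥ c := by
      have := covarianceBilin_self (μ := multivariateGaussian 0 P) IsGaussian.memLp_two_id (WithLp.toLp 2 c)
      rw [covarianceBilin_multivariateGaussian hP] at this
      exact this.symm
    simp [this]
  · exact IsGaussian.integrable_id

lemma mg_moment {P : Matrix ι ι ℝ} (hP : P.PosSemidef) (c : ι → ℝ) (s : ℝ) (hs : 0 < s) :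
    ∫ z, |dualL c z| ^ s ∂(multivariateGaussian 0 P) = gam s ^ s * (c ⬝ᵥ P *ᵥ c) ^ (s / 2) := by
  have h := integral_map (μ := multivariateGaussian 0 P) (φ := dualL c) (f := fun x : ℝ => |x| ^ s)
    (by fun_prop) (by apply Measurable.aestronglyMeasurable; fun_prop)
  rw [← h, mg_map hP, integral_gauss s hs, Real.coe_toNNReal]
  simpa using hP.dotProduct_mulVec_nonneg c

lemma mg_integrable {P : Matrix ι ι ℝ} (c : ι → ℝ) (s : ℝ) (hs : 0 < s) :
    Integrable (fun z => |dualL c z| ^ s) (multivariateGaussian 0 P) := by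
  have := (IsGaussian.memLp_dual (multivariateGaussian 0 P) (dualL c) (ENNReal.ofReal s) (by simp)).integrable_norm_rpow (by simpa using hs) (by simp)
  simpa [ENNReal.toReal_ofReal hs.le] using this

lemma mg_cov {P : Matrix ι ι ℝ} (hP : P.PosSemidef) (c d : ι → ℝ) :
    ∫ z, dualL c z * dualL d z ∂(multivariateGaussian 0 P) = c ⬝ᵥ P *ᵥ d := by
  have := covarianceBilin_apply (μ := multivariateGaussian 0 P) IsGaussian.memLp_two_id (WithLp.toLp 2 c) (WithLp.toLp 2 d)
  rw [covarianceBilin_multivariateGaussian hP] at this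
  rw [this]
  simp [dualL]

lemma mg_cov_integrable {P : Matrix ι ι ℝ} (c d : ι → ℝ) :
    Integrable (fun z => dualL c z * dualL d z) (multivariateGaussian 0 P) :=
  MemLp.integrable_mul (IsGaussian.memLp_dual _ _ 2 (by simp)) (IsGaussian.memLp_dual _ _ 2 (by simp))

/-- For a centred Gaussian vector `z` with covariance `P`, the second moment of the `s`-norm of
`(⟨c j, z⟩)_j` is at most the `2 / s`-th power of its `s`-th moment, by Jensen's inequality for the
concave function `x ↦ x ^ (2 / s)`; the latter moment is computed coordinatewise. -/
lemma mg_jensen {P : Matrix ι ι ℝ} (hP : P.PosSemidef) {k : ℕ} (c : Fin k → ι → ℝ) (s : ℝ)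
    (hs : 2 ≤ s) :
    Integrable (fun z => ((∑ j, |dualL (c j) z| ^ s) ^ (1 / s)) ^ 2) (multivariateGaussian 0 P) ∧
    ∫ z, ((∑ j, |dualL (c j) z| ^ s) ^ (1 / s)) ^ 2 ∂(multivariateGaussian 0 P) ≤
      gam s ^ 2 * (∑ j, (c j ⬝ᵥ P *ᵥ c j) ^ (s / 2)) ^ (2 / s) := by
  have hs0 : 0 < s := by linarith
  set μ := multivariateGaussian 0 P
  set U : EuclideanSpace ℝ ι → ℝ := fun z => ∑ j, |dualL (c j) z| ^ s with hU
  have hU0 : ∀ z, 0 ≤ U z := fun z => Finset.sum_nonneg fun j _ => by positivity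
  have hUi : Integrable U μ := integrable_finsetSum _ fun j _ => mg_integrable _ _ hs0
  have hUint : ∫ z, U z ∂μ = gam s ^ s * ∑ j, (c j ⬝ᵥ P *ᵥ c j) ^ (s / 2) := by
    rw [integral_finsetSum _ fun j _ => mg_integrable _ _ hs0, Finset.mul_sum]
    exact Finset.sum_congr rfl fun j _ => mg_moment hP _ _ hs0
  have he : ∀ z, (U z ^ (1 / s)) ^ 2 = U z ^ (2 / s) := by
    intro z
    rw [← Real.rpow_two, ← Real.rpow_mul (hU0 z)]
    congr 1; ring
  have h2s : 2 / s ≤ 1 := by rw [div_le_one hs0]; exact hs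
  have hAint : Integrable (fun z => U z ^ (2 / s)) μ := by
    refine Integrable.mono' (hUi.add (integrable_const 1)) ?_ (Filter.Eventually.of_forall fun z => ?_)
    · apply Measurable.aestronglyMeasurable; fun_prop
    · have h0 := hU0 z
      rw [Real.norm_of_nonneg (by positivity)]
      simp only [Pi.add_apply]
      rcases le_total 1 (U z) with h | h
      · calc U z ^ (2 / s) ≤ U z ^ (1 : ℝ) := Real.rpow_le_rpow_of_exponent_le h h2s
          _ ≤ _ := by simp
      · calc U z ^ (2 / s) ≤ 1 := Real.rpow_le_one h0 h (by positivity)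
          _ ≤ _ := by linarith
  change Integrable (fun z => (U z ^ (1 / s)) ^ 2) μ ∧ ∫ z, (U z ^ (1 / s)) ^ 2 ∂μ ≤ _
  simp_rw [he]
  refine ⟨hAint, ?_⟩
  have hj := (Real.concaveOn_rpow (p := 2 / s) (by positivity) h2s).le_map_integral
    (f := U) (μ := μ) (Real.continuous_rpow_const (by positivity)).continuousOn isClosed_Ici
    (Filter.Eventually.of_forall hU0) hUi hAint
  refine hj.trans (le_of_eq ?_)
  have hg := gam_pos s hs0
  rw [hUint, Real.mul_rpow (by positivity), ← Real.rpow_mul hg.le, mul_div_cancel₀ _ hs0.ne',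
    Real.rpow_two]
  refine Finset.sum_nonneg fun j _ => Real.rpow_nonneg ?_ _
  simpa using hP.dotProduct_mulVec_nonneg (c j)
end

/-! ### Hölder duality and balls for the vector norms -/

lemma pNorm_ofReal {k : ℕ} {t : ℝ} (ht : 0 < t) (x : Fin k → ℝ) :
    pNorm (ENNReal.ofReal t) x = (∑ i, |x i| ^ t) ^ (1 / t) := by
  simp [pNorm, ENNReal.toReal_ofReal ht.le]

lemma pNorm_eq_norm {k : ℕ} {a : ℝ≥0∞} (ha : 1 ≤ a) (x : Fin k → ℝ) :
    pNorm a x = ‖(WithLp.toLp a x : PiLp a fun _ : Fin k => ℝ)‖ := by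
  unfold pNorm
  split_ifs with h
  · subst h
    simp [PiLp.norm_eq_ciSup]
  · rw [PiLp.norm_eq_sum (ENNReal.toReal_pos (by positivity) h)]
    simp

/-- The extremal vector in Hölder's inequality: it has `t`-norm at most one and pairs with `f` to
the `s`-norm of `f`. -/
lemma exists_dual {k : ℕ} {s t : ℝ} (h : s.HolderConjugate t) (f : Fin k → ℝ) :
    ∃ y : Fin k → ℝ, ∑ i, |y i| ^ t ≤ 1 ∧ ∑ i, y i * f i = (∑ i, |f i| ^ s) ^ (1 / s) := by
  obtain ⟨g, hg, hgf⟩ := (NNReal.isGreatest_Lp Finset.univ (fun i => ‖f i‖₊) h).1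
  have hgf' := congrArg (fun z : NNReal => (z : ℝ)) hgf
  have hg' : ((∑ i, g i ^ t : NNReal) : ℝ) ≤ 1 := by exact_mod_cast hg
  push_cast at hgf' hg'
  simp only [Real.norm_eq_abs] at hgf'
  refine ⟨fun i => (SignType.sign (f i) : ℝ) * g i, le_trans (Finset.sum_le_sum fun i _ => ?_) hg', ?_⟩
  · refine Real.rpow_le_rpow (abs_nonneg _) ?_ h.symm.nonneg
    rw [abs_mul, NNReal.abs_eq]
    refine mul_le_of_le_one_left (g i).2 ?_
    rcases SignType.sign (f i) with _ | _ | _ <;> simp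
  · rw [← hgf']
    refine Finset.sum_congr rfl fun i _ => ?_
    rw [← sign_mul_self (f i)]
    ring

/-- The exponent `t / (t - 2)`, the Hölder conjugate of `t / 2`, read as `∞` when `t = 2`. -/
noncomputable def ex (t : ℝ) : ℝ≥0∞ := if t = 2 then ∞ else ENNReal.ofReal (t / (t - 2))

lemma one_le_ex {t : ℝ} (ht : 2 ≤ t) : 1 ≤ ex t := by
  unfold ex
  split_ifs with h
  · simp
  · have : 0 < t - 2 := by rcases ht.lt_or_eq with h' | h' <;> [linarith; exact absurd h'.symm h]
    rw [ENNReal.one_le_ofReal, one_le_div this]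
    linarith

lemma conj_ex {t : ℝ} (ht : 2 < t) : (t / 2).HolderConjugate (t / (t - 2)) := by
  rw [Real.holderConjugate_iff]
  have : t - 2 ≠ 0 := by linarith
  have : t ≠ 0 := by linarith
  refine ⟨by linarith, ?_⟩
  field_simp
  ring

lemma holder_ex {k : ℕ} {t : ℝ} (ht : 2 ≤ t) (v u : Fin k → ℝ) :
    ∑ i, v i * u i ^ 2 ≤ pNorm (ex t) v * ((∑ i, |u i| ^ t) ^ (1 / t)) ^ 2 := by
  rcases ht.eq_or_lt with h | h
  · subst h
    have h0 : (0 : ℝ) ≤ ∑ i, u i ^ 2 := Finset.sum_nonneg fun i _ => sq_nonneg _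
    have : ((∑ i, |u i| ^ (2 : ℝ)) ^ (1 / (2 : ℝ))) ^ 2 = ∑ i, u i ^ 2 := by
      simp only [Real.rpow_two, sq_abs]
      rw [← Real.sqrt_eq_rpow, Real.sq_sqrt h0]
    rw [this, Finset.mul_sum]
    refine Finset.sum_le_sum fun i _ => mul_le_mul_of_nonneg_right ?_ (sq_nonneg _)
    simp only [ex, pNorm, if_true]
    exact (le_abs_self _).trans (le_ciSup (f := fun i => |v i|) (Set.finite_range _).bddAbove i)
  · have hc := conj_ex h
    have h1 := Real.inner_le_Lp_mul_Lq Finset.univ v (fun i => u i ^ 2) hc.symm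
    rw [ex, if_neg h.ne', pNorm_ofReal hc.symm.pos]
    refine h1.trans (le_of_eq ?_)
    congr 1
    have h2 : ∀ i, |u i ^ 2| ^ (t / 2) = |u i| ^ t := by
      intro i
      rw [abs_pow, ← Real.rpow_two, ← Real.rpow_mul (abs_nonneg _)]
      congr 1; ring
    simp_rw [h2]
    rw [← Real.rpow_two, ← Real.rpow_mul (Finset.sum_nonneg fun i _ => by positivity)]
    congr 1
    field_simp

/-- The supremum of `∑ v i * y i` over the unit ball of the `ex t`-norm is attained, with value the
`t / 2`-norm of `y`; for `t = 2` the all-ones vector is extremal. -/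
lemma exists_dual_ex {k : ℕ} {t : ℝ} (ht : 2 ≤ t) (y : Fin k → ℝ) (hy : ∀ i, 0 ≤ y i) :
    ∃ v : Fin k → ℝ, pNorm (ex t) v ≤ 1 ∧ ∑ i, v i * y i = (∑ i, y i ^ (t / 2)) ^ (2 / t) := by
  rcases ht.eq_or_lt with h | h
  · subst h
    refine ⟨fun _ => 1, ?_, by simp⟩
    simp only [ex, pNorm, if_true]
    exact Real.iSup_le (by simp) zero_le_one
  · have hc := conj_ex h
    obtain ⟨v, hv, hvy⟩ := exists_dual hc y
    refine ⟨v, ?_, ?_⟩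
    · rw [ex, if_neg h.ne', pNorm_ofReal hc.symm.pos]
      exact Real.rpow_le_one (Finset.sum_nonneg fun i _ => by positivity) hv
        (one_div_nonneg.2 hc.symm.nonneg)
    · rw [hvy]
      simp_rw [abs_of_nonneg (hy _)]
      congr 1
      field_simp

lemma pNorm_smul {k : ℕ} {a : ℝ≥0∞} (ha : 1 ≤ a) (c : ℝ) (hc : 0 ≤ c) (x : Fin k → ℝ) :
    pNorm a (c • x) = c * pNorm a x := by
  have : Fact (1 ≤ a) := ⟨ha⟩
  rw [pNorm_eq_norm ha, pNorm_eq_norm ha, WithLp.toLp_smul, norm_smul, Real.norm_of_nonneg hc]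

lemma pNorm_nonneg {k : ℕ} {a : ℝ≥0∞} (ha : 1 ≤ a) (x : Fin k → ℝ) : 0 ≤ pNorm a x := by
  have : Fact (1 ≤ a) := ⟨ha⟩
  rw [pNorm_eq_norm ha]
  exact norm_nonneg _

lemma pNorm_ball_eq {k : ℕ} {a : ℝ≥0∞} (ha : 1 ≤ a) (c : ℝ) :
    haveI : Fact (1 ≤ a) := ⟨ha⟩
    {x : Fin k → ℝ | pNorm a x ≤ c} =
      (PiLp.continuousLinearEquiv a ℝ (fun _ : Fin k => ℝ)) '' Metric.closedBall 0 c := by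
  have : Fact (1 ≤ a) := ⟨ha⟩
  ext x
  simp only [Set.mem_ofPred_eq, Set.mem_image, Metric.mem_closedBall, dist_zero_right]
  constructor
  · intro h
    exact ⟨WithLp.toLp a x, by rwa [← pNorm_eq_norm ha], rfl⟩
  · rintro ⟨y, hy, rfl⟩
    rw [pNorm_eq_norm ha]
    exact hy

lemma ball_compact {k : ℕ} {a : ℝ≥0∞} (ha : 1 ≤ a) (c : ℝ) :
    IsCompact {x : Fin k → ℝ | pNorm a x ≤ c} := by
  have : Fact (1 ≤ a) := ⟨ha⟩
  have : ProperSpace (PiLp a fun _ : Fin k => ℝ) := FiniteDimensional.proper ℝ _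
  rw [pNorm_ball_eq ha]
  exact (isCompact_closedBall _ _).image (ContinuousLinearEquiv.continuous _)

lemma ball_convex {k : ℕ} {a : ℝ≥0∞} (ha : 1 ≤ a) (c : ℝ) :
    Convex ℝ {x : Fin k → ℝ | pNorm a x ≤ c} := by
  have : Fact (1 ≤ a) := ⟨ha⟩
  rw [pNorm_ball_eq ha]
  exact (convex_closedBall _ _).linear_image
    (PiLp.continuousLinearEquiv a ℝ (fun _ : Fin k => ℝ)).toLinearEquiv.toLinearMap

/-! ### The set `K` and its separation from convex compact sets -/

section
variable {m n l : ℕ} (A : Matrix (Fin m) (Fin n) ℝ) (B : Matrix (Fin l) (Fin n) ℝ)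

/-- The block matrix `[[Diag v, -A], [-Aᵀ, Bᵀ Diag w B]]` whose positivity defines `Kset`. -/
def blockM (vw : (Fin m → ℝ) × (Fin l → ℝ)) : Matrix (Fin m ⊕ Fin n) (Fin m ⊕ Fin n) ℝ :=
  fromBlocks (diagonal vw.1) (-A) (-Aᵀ) (Bᵀ * diagonal vw.2 * B)

lemma blockM_symm (vw : (Fin m → ℝ) × (Fin l → ℝ)) : (blockM A B vw)ᵀ = blockM A B vw := by
  simp [blockM, fromBlocks_transpose, Matrix.mul_assoc]

lemma blockM_quad (vw : (Fin m → ℝ) × (Fin l → ℝ)) (y : Fin m → ℝ) (x : Fin n → ℝ) :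
    Sum.elim y x ⬝ᵥ blockM A B vw *ᵥ Sum.elim y x =
      ∑ i, vw.1 i * y i ^ 2 + ∑ j, vw.2 j * (B *ᵥ x) j ^ 2 - 2 * (y ⬝ᵥ A *ᵥ x) := by
  have h1 : y ⬝ᵥ diagonal vw.1 *ᵥ y = ∑ i, vw.1 i * y i ^ 2 := by
    simp only [dotProduct, mulVec_diagonal]
    exact Finset.sum_congr rfl fun i _ => by ring
  have h2 : x ⬝ᵥ (Bᵀ * diagonal vw.2 * B) *ᵥ x = ∑ j, vw.2 j * (B *ᵥ x) j ^ 2 := by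
    rw [← mulVec_mulVec, ← mulVec_mulVec, dotProduct_mulVec, vecMul_transpose]
    simp only [dotProduct, mulVec_diagonal]
    exact Finset.sum_congr rfl fun i _ => by ring
  have h3 : x ⬝ᵥ Aᵀ *ᵥ y = y ⬝ᵥ A *ᵥ x := by
    rw [dotProduct_mulVec, vecMul_transpose, dotProduct_comm]
  rw [blockM, fromBlocks_mulVec, sumElim_dotProduct_sumElim]
  simp only [Sum.elim_comp_inl, Sum.elim_comp_inr, dotProduct_add, neg_mulVec, dotProduct_neg,
    h1, h2, h3]
  ring

lemma mem_Kset_iff (vw : (Fin m → ℝ) × (Fin l → ℝ)) :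
    vw ∈ Kset A B ↔ ∀ y x, 2 * (y ⬝ᵥ A *ᵥ x) ≤
      ∑ i, vw.1 i * y i ^ 2 + ∑ j, vw.2 j * (B *ᵥ x) j ^ 2 := by
  change (blockM A B vw).PosSemidef ↔ _
  rw [posSemidef_iff_dotProduct_mulVec]
  constructor
  · rintro ⟨-, h⟩ y x
    have := h (Sum.elim y x)
    rw [star_trivial, blockM_quad] at this
    linarith
  · intro h
    refine ⟨by rw [IsHermitian, conjTranspose_eq_transpose_of_trivial, blockM_symm], fun z => ?_⟩
    rw [← Sum.elim_comp_inl_inr z, star_trivial, blockM_quad]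
    linarith [h (z ∘ Sum.inl) (z ∘ Sum.inr)]

/-- With `D` such that `A = D B`, the row sums and column sums of `|D|` form an element of `K`. -/
lemma Kset_nonempty (hB : Function.Injective B.mulVec) : (Kset A B).Nonempty := by
  obtain ⟨g, hg⟩ := LinearMap.exists_leftInverse_of_injective B.mulVecLin
    (LinearMap.ker_eq_bot.2 hB)
  set D : Matrix (Fin m) (Fin l) ℝ := A * LinearMap.toMatrix' g
  have hD : ∀ x, A *ᵥ x = D *ᵥ (B *ᵥ x) := by
    intro x
    have h1 : g (B *ᵥ x) = x := LinearMap.congr_fun hg x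
    rw [← mulVec_mulVec, LinearMap.toMatrix'_mulVec, h1]
  refine ⟨(fun i => ∑ j, |D i j|, fun j => ∑ i, |D i j|), (mem_Kset_iff A B _).2 fun y x => ?_⟩
  rw [hD]
  set u := B *ᵥ x
  simp only [Finset.sum_mul]
  rw [Finset.sum_comm (f := fun j i => |D i j| * u j ^ 2), ← Finset.sum_add_distrib]
  simp only [dotProduct, mulVec, Finset.mul_sum, ← Finset.sum_add_distrib]
  refine Finset.sum_le_sum fun i _ => Finset.sum_le_sum fun j _ => ?_
  rcases abs_cases (D i j) with ⟨h, h'⟩ | ⟨h, h'⟩ <;> rw [h]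
  · nlinarith [mul_nonneg h' (sq_nonneg (y i - u j))]
  · nlinarith [mul_nonneg (neg_nonneg.2 h'.le) (sq_nonneg (y i + u j))]

lemma psd_closed {ι : Type*} [Fintype ι] : IsClosed {N : Matrix ι ι ℝ | N.PosSemidef} := by
  simp only [posSemidef_iff_dotProduct_mulVec, Set.ofPred_and, Set.ofPred_forall, IsHermitian]
  refine IsClosed.inter (isClosed_eq (by fun_prop) (by fun_prop))
    (isClosed_iInter fun x => isClosed_le (by fun_prop) (by fun_prop))

lemma psd_convex {ι : Type*} [Fintype ι] : Convex ℝ {N : Matrix ι ι ℝ | N.PosSemidef} :=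
  fun _ hM _ hN _ _ ha hb _ => (hM.smul ha).add (hN.smul hb)

/-- `blockM` is affine, being the sum of a constant and a linear map. -/
lemma blockM_convex (s t : (Fin m → ℝ) × (Fin l → ℝ)) (a b : ℝ) (h : a + b = 1) :
    blockM A B (a • s + b • t) = a • blockM A B s + b • blockM A B t := by
  have h1 : ∀ {i j : ℕ} (M : Matrix (Fin i) (Fin j) ℝ), a • M + b • M = M := fun M => by
    rw [← add_smul, h, one_smul]
  simp only [blockM, fromBlocks_smul, fromBlocks_add, h1, Prod.fst_add, Prod.snd_add, Prod.smul_fst,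
    Prod.smul_snd]
  congr 1
  · ext i j
    by_cases hij : i = j <;> simp [hij]
  · have h2 : diagonal (a • s.2 + b • t.2) = a • diagonal s.2 + b • diagonal t.2 := by
      ext i j
      by_cases hij : i = j <;> simp [hij]
    rw [h2, Matrix.mul_add, Matrix.add_mul, Matrix.mul_smul, Matrix.mul_smul, Matrix.smul_mul,
      Matrix.smul_mul]

omit A B in
lemma sumElim_zero_quad (P : Matrix (Fin m ⊕ Fin n) (Fin m ⊕ Fin n) ℝ) (b : Fin n → ℝ) :
    Sum.elim 0 b ⬝ᵥ P *ᵥ Sum.elim 0 b =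
      ∑ i, ∑ k, b i * (P (Sum.inr i) (Sum.inr k) * b k) := by
  simp [dotProduct, mulVec, Fintype.sum_sum_type, Finset.mul_sum]

/-- Semidefinite duality: a compact convex set `S` meets `K` as soon as no positive semidefinite
matrix `P` separates the block matrices indexed by `S` from the cone of positive semidefinite
matrices. The pairing of `P` with the block matrix of `(v, w)` is
`∑ vᵢ Pᵢᵢ + ∑ wⱼ bⱼᵀPbⱼ - 2 ∑ Aᵢⱼ Pᵢⱼ`, where `bⱼ` is the `j`-th row of `B`. -/
lemma sdp_duality (S : Set ((Fin m → ℝ) × (Fin l → ℝ))) (hSc : IsCompact S) (hSv : Convex ℝ S)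
    (hS : ∀ P : Matrix (Fin m ⊕ Fin n) (Fin m ⊕ Fin n) ℝ, P.PosSemidef → ∃ vw ∈ S,
      2 * ∑ i, ∑ j, A i j * P (Sum.inl i) (Sum.inr j) ≤
        ∑ i, vw.1 i * P (Sum.inl i) (Sum.inl i) +
        ∑ j, vw.2 j * (Sum.elim 0 (B j) ⬝ᵥ P *ᵥ Sum.elim 0 (B j))) :
    ∃ vw ∈ S, vw ∈ Kset A B := by
  by_contra! hcon
  set ι := Fin m ⊕ Fin n
  have : LocallyConvexSpace ℝ (Matrix ι ι ℝ) :=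
    inferInstanceAs (LocallyConvexSpace ℝ (ι → ι → ℝ))
  have hcont : Continuous (blockM A B) := by
    unfold blockM
    fun_prop
  have hconv : Convex ℝ (blockM A B '' S) := by
    rintro _ ⟨s, hs, rfl⟩ _ ⟨t, ht, rfl⟩ a b ha hb hab
    exact ⟨_, hSv hs ht ha hb hab, blockM_convex A B s t a b hab⟩
  obtain ⟨F, u, r, h1, hur, h2⟩ := geometric_hahn_banach_compact_closed hconv (hSc.image hcont)
    (psd_convex (ι := ι)) psd_closed (by
      rw [Set.disjoint_left]
      rintro _ ⟨s, hs, rfl⟩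
      exact hcon s hs)
  have hu : u < 0 := by
    have := h2 0 PosSemidef.zero
    rw [map_zero] at this
    linarith
  -- a functional bounded below on a cone is nonnegative there: otherwise rescale `N` to value `r`
  have hF : ∀ N : Matrix ι ι ℝ, N.PosSemidef → 0 ≤ F N := by
    intro N hN
    by_contra! hneg
    have := h2 ((r / F N) • N) (hN.smul (by
      have : r < 0 := by
        have := h2 0 PosSemidef.zero
        rwa [map_zero] at this
      exact (div_pos_of_neg_of_neg this hneg).le))
    rw [map_smul, smul_eq_mul, div_mul_cancel₀ _ hneg.ne] at this
    exact lt_irrefl _ this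
  -- the symmetric matrix representing the separating functional on symmetric matrices
  set P : Matrix ι ι ℝ := Matrix.of fun i j =>
    (F (Matrix.single i j 1) + F (Matrix.single j i 1)) / 2 with hPdef
  have hFN : ∀ N : Matrix ι ι ℝ, Nᵀ = N → F N = ∑ i, ∑ j, N i j * P i j := by
    intro N hN
    have e : ∀ N : Matrix ι ι ℝ, F N = ∑ i, ∑ j, N i j * F (Matrix.single i j 1) := by
      intro N
      conv_lhs => rw [matrix_eq_sum_single N]
      simp only [map_sum]
      refine Finset.sum_congr rfl fun i _ => Finset.sum_congr rfl fun j _ => ?_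
      rw [← smul_eq_mul, ← map_smul, Matrix.smul_single, smul_eq_mul, mul_one]
    have e1 := e N
    have e2 : F N = ∑ i, ∑ j, N i j * F (Matrix.single j i 1) := by
      rw [e N, Finset.sum_comm]
      refine Finset.sum_congr rfl fun i _ => Finset.sum_congr rfl fun j _ => ?_
      rw [show N i j = N j i from congrFun (congrFun hN j) i]
    have e3 : ∑ i, ∑ j, N i j * P i j = (∑ i, ∑ j, N i j * F (Matrix.single i j 1) +
        ∑ i, ∑ j, N i j * F (Matrix.single j i 1)) / 2 := by
      simp only [← Finset.sum_add_distrib, Finset.sum_div]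
      refine Finset.sum_congr rfl fun i _ => Finset.sum_congr rfl fun j _ => ?_
      simp only [hPdef, Matrix.of_apply]
      ring
    rw [e3, ← e1, ← e2]
    ring
  have hPsym : ∀ i j, P i j = P j i := fun i j => by simp [hPdef, add_comm]
  have hP : P.PosSemidef := by
    refine .of_dotProduct_mulVec_nonneg (by ext i j; simp [hPsym i j]) fun z => ?_
    -- `zᵀPz` is the value of `F` at the rank-one matrix `z zᵀ`
    have h3 := hF _ (posSemidef_vecMulVec_self_star z)
    rw [hFN _ (by ext i j; simp [vecMulVec_apply, mul_comm])] at h3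
    refine h3.trans (le_of_eq ?_)
    simp only [dotProduct, mulVec, Finset.mul_sum, vecMulVec_apply, star_trivial]
    exact Finset.sum_congr rfl fun i _ => Finset.sum_congr rfl fun j _ => by ring
  obtain ⟨vw, hvw, hle⟩ := hS P hP
  have h4 := h1 _ ⟨vw, hvw, rfl⟩
  rw [hFN _ (blockM_symm A B vw)] at h4
  have h5 : ∑ i, ∑ j, blockM A B vw i j * P i j =
      ∑ i, vw.1 i * P (Sum.inl i) (Sum.inl i) +
        ∑ j, vw.2 j * (Sum.elim 0 (B j) ⬝ᵥ P *ᵥ Sum.elim 0 (B j)) -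
        2 * ∑ i, ∑ j, A i j * P (Sum.inl i) (Sum.inr j) := by
    have q1 : ∑ j, vw.2 j * (Sum.elim 0 (B j) ⬝ᵥ P *ᵥ Sum.elim 0 (B j)) =
        ∑ i, ∑ j, (Bᵀ * diagonal vw.2 * B) i j * P (Sum.inr i) (Sum.inr j) := by
      have r1 : ∀ j, Sum.elim 0 (B j) ⬝ᵥ P *ᵥ Sum.elim 0 (B j) =
          ∑ i, ∑ k, B j i * (P (Sum.inr i) (Sum.inr k) * B j k) :=
        fun j => sumElim_zero_quad P (B j)
      have r2 : ∀ i k, (Bᵀ * diagonal vw.2 * B) i k = ∑ j, B j i * vw.2 j * B j k := fun i k => by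
        rw [Matrix.mul_apply]
        simp only [mul_diagonal, transpose_apply]
      simp only [r1, r2, Finset.mul_sum, Finset.sum_mul]
      rw [Finset.sum_comm]
      refine Finset.sum_congr rfl fun i _ => ?_
      rw [Finset.sum_comm]
      exact Finset.sum_congr rfl fun j _ => Finset.sum_congr rfl fun k _ => by ring
    have q2 : ∑ i, ∑ j, A j i * P (Sum.inr i) (Sum.inl j) =
        ∑ i, ∑ j, A i j * P (Sum.inl i) (Sum.inr j) := by
      rw [Finset.sum_comm]
      exact Finset.sum_congr rfl fun i _ => Finset.sum_congr rfl fun j _ => by rw [hPsym]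
    rw [q1, Fintype.sum_sum_type]
    simp only [Fintype.sum_sum_type, blockM, fromBlocks_apply₁₁, fromBlocks_apply₁₂,
      fromBlocks_apply₂₁, fromBlocks_apply₂₂, diagonal_apply, ite_mul, zero_mul,
      Finset.sum_ite_eq, Finset.mem_univ, if_true, Finset.sum_add_distrib, Matrix.neg_apply,
      neg_mul, Finset.sum_neg_distrib, transpose_apply, q2]
    ring
  linarith
end

/-! ### Gaussian rounding and weak duality -/

section
variable {m n l : ℕ} (A : Matrix (Fin m) (Fin n) ℝ) (B : Matrix (Fin l) (Fin n) ℝ)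

/-- A bound on the bilinear form of `A` extends, at the cost of a factor `γ_p γ_s`, from pairs of
vectors to positive semidefinite matrices `P`: take expectations over a Gaussian vector `(y, x)`
with covariance `P`. -/
lemma gaussian_rounding {s p G : ℝ} (hs : 2 ≤ s) (hp : 2 ≤ p) (hG : 0 ≤ G)
    (hAG : ∀ y x, y ⬝ᵥ A *ᵥ x ≤
      G * ((∑ i, |y i| ^ s) ^ (1 / s) * (∑ j, |(B *ᵥ x) j| ^ p) ^ (1 / p)))
    {P : Matrix (Fin m ⊕ Fin n) (Fin m ⊕ Fin n) ℝ} (hP : P.PosSemidef) :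
    2 * ∑ i, ∑ j, A i j * P (Sum.inl i) (Sum.inr j) ≤
      gam p * gam s * G * ((∑ i, P (Sum.inl i) (Sum.inl i) ^ (s / 2)) ^ (2 / s) +
        (∑ j, (Sum.elim 0 (B j) ⬝ᵥ P *ᵥ Sum.elim 0 (B j)) ^ (p / 2)) ^ (2 / p)) := by
  set μ := multivariateGaussian 0 P
  let e : Fin m ⊕ Fin n → Fin m ⊕ Fin n → ℝ := fun k => Pi.single k 1
  have he : ∀ k (z : EuclideanSpace ℝ (Fin m ⊕ Fin n)), dualL (e k) z = z k := fun k z => by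
    simp [dualL_apply, e]
  have heP : ∀ k k', e k ⬝ᵥ P *ᵥ e k' = P k k' := fun k k' => by simp [e]
  have hBz : ∀ j (z : EuclideanSpace ℝ (Fin m ⊕ Fin n)),
      dualL (Sum.elim 0 (B j)) z = (B *ᵥ fun k => z (Sum.inr k)) j := fun j z => by
    simp [dualL_apply, dotProduct, mulVec, Fintype.sum_sum_type]
  obtain ⟨hUi, hU⟩ := mg_jensen hP (fun i => e (Sum.inl i)) s hs
  obtain ⟨hVi, hV⟩ := mg_jensen hP (fun j => Sum.elim (0 : Fin m → ℝ) (B j)) p hp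
  simp only [he, heP] at hUi hU
  simp only [hBz] at hVi hV
  have hAint : ∀ i j, Integrable (fun z : EuclideanSpace ℝ (Fin m ⊕ Fin n) =>
      A i j * (z (Sum.inl i) * z (Sum.inr j))) μ := fun i j => by
    simpa only [he] using (mg_cov_integrable (P := P) (e (Sum.inl i)) (e (Sum.inr j))).const_mul (A i j)
  have hlhs : ∫ z, ∑ i, ∑ j, A i j * (z (Sum.inl i) * z (Sum.inr j)) ∂μ =
      ∑ i, ∑ j, A i j * P (Sum.inl i) (Sum.inr j) := by
    rw [integral_finsetSum _ fun i _ => integrable_finsetSum _ fun j _ => hAint i j]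
    refine Finset.sum_congr rfl fun i _ => ?_
    rw [integral_finsetSum _ fun j _ => hAint i j]
    refine Finset.sum_congr rfl fun j _ => ?_
    have := mg_cov hP (e (Sum.inl i)) (e (Sum.inr j))
    simp only [he, heP] at this
    rw [integral_const_mul, this]
  have hgp := gam_pos p (by linarith)
  have hgs := gam_pos s (by linarith)
  rw [← hlhs]
  set U : EuclideanSpace ℝ (Fin m ⊕ Fin n) → ℝ := fun z => (∑ i, |z (Sum.inl i)| ^ s) ^ (1 / s)
  set V : EuclideanSpace ℝ (Fin m ⊕ Fin n) → ℝ :=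
    fun z => (∑ j, |(B *ᵥ fun k => z (Sum.inr k)) j| ^ p) ^ (1 / p)
  -- AM-GM with the weight `gam p / gam s` balances the two Gaussian moments
  have hpt : ∀ z : EuclideanSpace ℝ (Fin m ⊕ Fin n),
      ∑ i, ∑ j, A i j * (z (Sum.inl i) * z (Sum.inr j)) ≤
        G / 2 * (gam p / gam s) * U z ^ 2 + G / 2 * (gam s / gam p) * V z ^ 2 := by
    intro z
    have h1 := hAG (fun i => z (Sum.inl i)) (fun k => z (Sum.inr k))
    have h2 : (fun i => z (Sum.inl i)) ⬝ᵥ A *ᵥ (fun k => z (Sum.inr k)) =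
        ∑ i, ∑ j, A i j * (z (Sum.inl i) * z (Sum.inr j)) := by
      simp only [dotProduct, mulVec, Finset.mul_sum]
      exact Finset.sum_congr rfl fun i _ => Finset.sum_congr rfl fun j _ => by ring
    rw [h2] at h1
    refine h1.trans ?_
    change G * (U z * V z) ≤ _
    have h3 : 0 ≤ G / (2 * (gam p * gam s)) * (gam p * U z - gam s * V z) ^ 2 := by positivity
    have h4 : G / (2 * (gam p * gam s)) * (gam p * U z - gam s * V z) ^ 2 =
        G / 2 * (gam p / gam s) * U z ^ 2 + G / 2 * (gam s / gam p) * V z ^ 2 -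
          G * (U z * V z) := by
      field_simp
      ring
    linarith
  have hI := integral_mono (integrable_finsetSum _ fun i _ => integrable_finsetSum _ fun j _ => hAint i j)
    ((hUi.const_mul (G / 2 * (gam p / gam s))).add (hVi.const_mul (G / 2 * (gam s / gam p)))) hpt
  rw [integral_add' (hUi.const_mul _) (hVi.const_mul _), integral_const_mul, integral_const_mul] at hI
  have h5 := mul_le_mul_of_nonneg_left hU (show 0 ≤ G / 2 * (gam p / gam s) by positivity)
  have h6 := mul_le_mul_of_nonneg_left hV (show 0 ≤ G / 2 * (gam s / gam p) by positivity)
  refine (mul_le_mul_of_nonneg_left (hI.trans (add_le_add h5 h6)) zero_le_two).trans (le_of_eq ?_)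
  field_simp

lemma sum_rpow_nonneg {k : ℕ} (f : Fin k → ℝ) (s t : ℝ) : 0 ≤ (∑ i, |f i| ^ s) ^ t :=
  Real.rpow_nonneg (Finset.sum_nonneg fun _ _ => by positivity) _

/-- `q / (2 - q) = q* / (q* - 2)`, including the convention at the exponent two. -/
lemma ex_conj {q : ℝ} (hq1 : 1 < q) :
    (if q = 2 then (∞ : ℝ≥0∞) else ENNReal.ofReal (q / (2 - q))) = ex (q / (q - 1)) := by
  have h1 : q - 1 ≠ 0 := by linarith
  have h2 : q / (q - 1) = 2 ↔ q = 2 := by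
    rw [div_eq_iff h1]; constructor <;> intro h <;> linarith
  unfold ex
  by_cases h : q = 2
  · rw [if_pos h, if_pos (h2.2 h)]
  · rw [if_neg h, if_neg (h2.not.2 h)]
    have h3 : 2 - q ≠ 0 := fun h' => h (by linarith)
    congr 1
    have h4 : q / (q - 1) - 2 = (2 - q) / (q - 1) := by field_simp; ring
    rw [h4]
    field_simp

/-- Weak duality: every element of `K` gives an upper bound on the generalized norm. -/
lemma pNorm_mulVec_le {p q s : ℝ} (hp : 2 ≤ p) (hs : 2 ≤ s) (hqs : q.HolderConjugate s)
    {vw : (Fin m → ℝ) × (Fin l → ℝ)} (hvw : vw ∈ Kset A B) {x : Fin n → ℝ}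
    (hx : pNorm (ENNReal.ofReal p) (B *ᵥ x) ≤ 1) :
    pNorm (ENNReal.ofReal q) (A *ᵥ x) ≤ 1 / 2 * (pNorm (ex s) vw.1 + pNorm (ex p) vw.2) := by
  rw [pNorm_ofReal (by linarith)] at hx
  rw [pNorm_ofReal hqs.pos]
  obtain ⟨y, hy, hyA⟩ := exists_dual hqs (A *ᵥ x)
  have h1 := (mem_Kset_iff A B vw).1 hvw y x
  have h0 : y ⬝ᵥ A *ᵥ x = ∑ i, y i * (A *ᵥ x) i := rfl
  have hy1 : (∑ i, |y i| ^ s) ^ (1 / s) ≤ 1 :=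
    Real.rpow_le_one (Finset.sum_nonneg fun _ _ => by positivity) hy (by positivity)
  have h2 := (holder_ex hs vw.1 y).trans (mul_le_of_le_one_right (pNorm_nonneg (one_le_ex hs) _)
    (pow_le_one₀ (sum_rpow_nonneg _ _ _) hy1))
  have h3 := (holder_ex hp vw.2 (B *ᵥ x)).trans
    (mul_le_of_le_one_right (pNorm_nonneg (one_le_ex hp) _)
    (pow_le_one₀ (sum_rpow_nonneg _ _ _) hx))
  rw [← hyA, ← h0]
  linarith

lemma gnorm_bddAbove (hB : Function.Injective B.mulVec) {p q s : ℝ} (hp : 2 ≤ p) (hs : 2 ≤ s)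
    (hqs : q.HolderConjugate s) :
    BddAbove {r : ℝ | ∃ v : Fin n → ℝ, pNorm (ENNReal.ofReal p) (B.mulVec v) ≤ 1 ∧
      r = pNorm (ENNReal.ofReal q) (A.mulVec v)} := by
  obtain ⟨vw, hvw⟩ := Kset_nonempty A B hB
  refine ⟨1 / 2 * (pNorm (ex s) vw.1 + pNorm (ex p) vw.2), ?_⟩
  rintro _ ⟨x, hx, rfl⟩
  exact pNorm_mulVec_le A B hp hs hqs hvw hx

/-- The pointwise bound `yᵀAx ≤ ‖A‖_{p↦q;B} ‖y‖_{q*} ‖Bx‖_p`. Injectivity of `B` handles `Bx = 0`. -/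
lemma bilinear_le (hB : Function.Injective B.mulVec) {p q s : ℝ} (hp : 2 ≤ p) (hs : 2 ≤ s)
    (hqs : q.HolderConjugate s) (y : Fin m → ℝ) (x : Fin n → ℝ) :
    y ⬝ᵥ A *ᵥ x ≤ gnorm A B (ENNReal.ofReal p) (ENNReal.ofReal q) *
      ((∑ i, |y i| ^ s) ^ (1 / s) * (∑ j, |(B *ᵥ x) j| ^ p) ^ (1 / p)) := by
  have hp1 : 1 ≤ ENNReal.ofReal p := by rw [ENNReal.one_le_ofReal]; linarith
  have hq1 : 1 ≤ ENNReal.ofReal q := by rw [ENNReal.one_le_ofReal]; exact hqs.lt.le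
  set G := gnorm A B (ENNReal.ofReal p) (ENNReal.ofReal q)
  have h1 : y ⬝ᵥ A *ᵥ x ≤ (∑ i, |y i| ^ s) ^ (1 / s) * pNorm (ENNReal.ofReal q) (A *ᵥ x) := by
    rw [pNorm_ofReal hqs.pos]
    exact Real.inner_le_Lp_mul_Lq Finset.univ y (A *ᵥ x) hqs.symm
  have h2 : pNorm (ENNReal.ofReal q) (A *ᵥ x) ≤ G * pNorm (ENNReal.ofReal p) (B *ᵥ x) := by
    have : Fact (1 ≤ ENNReal.ofReal p) := ⟨hp1⟩
    have : Fact (1 ≤ ENNReal.ofReal q) := ⟨hq1⟩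
    rcases (pNorm_nonneg hp1 (B *ᵥ x)).eq_or_lt with h | h
    · have hBx : B *ᵥ x = 0 := by
        rw [pNorm_eq_norm hp1, eq_comm, norm_eq_zero] at h
        simpa using h
      have hx : x = 0 := hB (by rw [hBx]; exact (mulVec_zero B).symm)
      rw [hx, mulVec_zero, mulVec_zero, pNorm_eq_norm hq1, pNorm_eq_norm hp1]
      simp
    · set c := pNorm (ENNReal.ofReal p) (B *ᵥ x)
      have h3 : pNorm (ENNReal.ofReal q) (A *ᵥ (c⁻¹ • x)) ≤ G := by
        refine le_csSup (gnorm_bddAbove A B hB hp hs hqs) ⟨c⁻¹ • x, ?_, rfl⟩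
        rw [mulVec_smul, pNorm_smul hp1 _ (by positivity)]
        exact (inv_mul_cancel₀ h.ne').le
      rw [mulVec_smul, pNorm_smul hq1 _ (by positivity), inv_mul_le_iff₀ h] at h3
      linarith
  rw [pNorm_ofReal (t := p) (by linarith)] at h2
  refine h1.trans ((mul_le_mul_of_nonneg_left h2 (sum_rpow_nonneg y s (1 / s))).trans (le_of_eq ?_))
  ring
end

/-- Let `A ∈ ℝ^{m×n}`, `B ∈ ℝ^{l×n}` injective, and `1 < q ≤ 2 ≤ p < ∞`.  Then
`‖A‖_{p↦q;B} ≤ (1/2)·min_{(v,w) ∈ K} (‖v‖_{q/(2−q)} + ‖w‖_{p/(p−2)}) ≤ γ_p γ_{q*} ‖A‖_{p↦q;B}`,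
where the exponents `q/(2−q)` and `p/(p−2)` are interpreted as `∞` when `q = 2` or `p = 2`. -/
theorem stmt16 (m n l : ℕ)
    (A : Matrix (Fin m) (Fin n) ℝ) (B : Matrix (Fin l) (Fin n) ℝ)
    (hB : Function.Injective B.mulVec)
    (p q : ℝ) (hq1 : 1 < q) (hq2 : q ≤ 2) (hp : 2 ≤ p) :
    gnorm A B (ENNReal.ofReal p) (ENNReal.ofReal q) ≤
      (1 / 2) * sInf {r : ℝ | ∃ vw ∈ Kset A B,
        r = pNorm (if q = 2 then (∞ : ℝ≥0∞) else ENNReal.ofReal (q / (2 - q))) vw.1 +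
            pNorm (if p = 2 then (∞ : ℝ≥0∞) else ENNReal.ofReal (p / (p - 2))) vw.2} ∧
    (1 / 2) * sInf {r : ℝ | ∃ vw ∈ Kset A B,
        r = pNorm (if q = 2 then (∞ : ℝ≥0∞) else ENNReal.ofReal (q / (2 - q))) vw.1 +
            pNorm (if p = 2 then (∞ : ℝ≥0∞) else ENNReal.ofReal (p / (p - 2))) vw.2} ≤
      gam p * gam (q / (q - 1)) * gnorm A B (ENNReal.ofReal p) (ENNReal.ofReal q) := by
  have hp1 : 1 ≤ ENNReal.ofReal p := by rw [ENNReal.one_le_ofReal]; linarith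
  have hq1' : 1 ≤ ENNReal.ofReal q := by rw [ENNReal.one_le_ofReal]; linarith
  rw [ex_conj hq1]
  change _ ≤ 1 / 2 * sInf {r : ℝ | ∃ vw ∈ Kset A B, r = pNorm _ vw.1 + pNorm (ex p) vw.2} ∧
    1 / 2 * sInf {r : ℝ | ∃ vw ∈ Kset A B, r = pNorm _ vw.1 + pNorm (ex p) vw.2} ≤ _
  have hqs : q.HolderConjugate (q / (q - 1)) := .conjExponent hq1
  have hs : 2 ≤ q / (q - 1) := by rw [le_div_iff₀ (by linarith)]; linarith
  set s := q / (q - 1)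
  have hes := one_le_ex hs
  have hep := one_le_ex hp
  have hset : (0 : ℝ) ∈ {r : ℝ | ∃ v : Fin n → ℝ, pNorm (ENNReal.ofReal p) (B.mulVec v) ≤ 1 ∧
      r = pNorm (ENNReal.ofReal q) (A.mulVec v)} := by
    have : Fact (1 ≤ ENNReal.ofReal p) := ⟨hp1⟩
    have : Fact (1 ≤ ENNReal.ofReal q) := ⟨hq1'⟩
    refine ⟨0, ?_, ?_⟩ <;> rw [mulVec_zero, pNorm_eq_norm (by assumption)] <;> simp
  constructor
  · have h : 2 * gnorm A B (ENNReal.ofReal p) (ENNReal.ofReal q) ≤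
        sInf {r : ℝ | ∃ vw ∈ Kset A B, r = pNorm (ex s) vw.1 + pNorm (ex p) vw.2} := by
      obtain ⟨vw, hvw⟩ := Kset_nonempty A B hB
      refine le_csInf ⟨_, vw, hvw, rfl⟩ ?_
      rintro _ ⟨vw, hvw, rfl⟩
      have : gnorm A B (ENNReal.ofReal p) (ENNReal.ofReal q) ≤
          1 / 2 * (pNorm (ex s) vw.1 + pNorm (ex p) vw.2) := by
        refine csSup_le ⟨0, hset⟩ ?_
        rintro _ ⟨x, hx, rfl⟩
        exact pNorm_mulVec_le A B hp hs hqs hvw hx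
      linarith
    linarith
  · have hG : 0 ≤ gnorm A B (ENNReal.ofReal p) (ENNReal.ofReal q) :=
      le_csSup (gnorm_bddAbove A B hB hp hs hqs) hset
    set G := gnorm A B (ENNReal.ofReal p) (ENNReal.ofReal q)
    have hgp := gam_pos p (by linarith)
    have hgs := gam_pos s (by linarith)
    set c := gam p * gam s * G with hc
    have hc0 : 0 ≤ c := by positivity
    -- the product of the two balls of radius `c` meets `K`
    obtain ⟨vw, ⟨hv, hw⟩, hK⟩ := sdp_duality A B
      ({v | pNorm (ex s) v ≤ c} ×ˢ {w | pNorm (ex p) w ≤ c})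
      ((ball_compact hes c).prod (ball_compact hep c))
      ((ball_convex hes c).prod (ball_convex hep c)) (by
        intro P hP
        have hR := gaussian_rounding A B hs hp hG (bilinear_le A B hB hp hs hqs) hP
        obtain ⟨v, hv, hvP⟩ := exists_dual_ex hs (fun i => P (Sum.inl i) (Sum.inl i))
          (fun i => hP.diag_nonneg)
        obtain ⟨w, hw, hwP⟩ := exists_dual_ex hp
          (fun j => Sum.elim (0 : Fin m → ℝ) (B j) ⬝ᵥ P *ᵥ Sum.elim 0 (B j))
          (fun j => by simpa using hP.dotProduct_mulVec_nonneg (Sum.elim 0 (B j)))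
        refine ⟨(c • v, c • w), ⟨?_, ?_⟩, ?_⟩
        · exact (pNorm_smul hes c hc0 v).trans_le (mul_le_of_le_one_right hc0 hv)
        · exact (pNorm_smul hep c hc0 w).trans_le (mul_le_of_le_one_right hc0 hw)
        · simp only [Pi.smul_apply, smul_eq_mul, mul_assoc, ← Finset.mul_sum]
          rw [hvP, hwP, ← mul_add]
          exact hR)
    have hinf : sInf {r : ℝ | ∃ vw ∈ Kset A B, r = pNorm (ex s) vw.1 + pNorm (ex p) vw.2} ≤
        pNorm (ex s) vw.1 + pNorm (ex p) vw.2 := by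
      refine csInf_le ⟨0, ?_⟩ ⟨vw, hK, rfl⟩
      rintro _ ⟨vw, -, rfl⟩
      exact add_nonneg (pNorm_nonneg hes _) (pNorm_nonneg hep _)
    have hv' : pNorm (ex s) vw.1 ≤ c := hv
    have hw' : pNorm (ex p) vw.2 ≤ c := hw
    linarith
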